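/- Let T, E₁, E₂ : ℝ × ℝ → ℝ³ and k₁, k₂ : ℝ × ℝ → ℝ be smooth with (T, E₁, E₂) pairwise ⟨·,·⟩_L-orthogonal, ⟨T,T⟩_L = ⟨E₂,E₂⟩_L = 1, ⟨E₁,E₁⟩_L = −1, satisfying Tₛ = k₁E₁ + k₂E₂, (E₁)ₛ = k₁T, (E₂)ₛ = −k₂T, and T_t = (k₂)ₛE₁ + (k₁)ₛE₂, (E₁)_t = (k₂)ₛT + uE₂, (E₂)_t = −(k₁)ₛT + uE₁ for a smooth function u : ℝ × ℝ → ℝ. Then uₛ = k₁(k₁)ₛ − k₂(k₂)ₛ; consequently, for each t there is a constant c(t) with u(s,t) = ½(k₁² − k₂²)(s,t) + c(t). -/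

import Mathlib

noncomputable section

open Real

/-- Minkowski 3-space: ℝ³ as a vector type. -/
abbrev V3 : Type := Fin 3 → ℝ

/-- Lorentzian inner product ⟨x,y⟩_L = −x₁y₁ + x₂y₂ + x₃y₃ on ℝ³. -/
def lor (x y : V3) : ℝ := -(x 0 * y 0) + x 1 * y 1 + x 2 * y 2

/-- Lorentzian cross product x ×_L y = (x₃y₂ − x₂y₃, x₃y₁ − x₁y₃, x₁y₂ − x₂y₁). -/
def lcross (x y : V3) : V3 :=
  ![x 2 * y 1 - x 1 * y 2, x 2 * y 0 - x 0 * y 2, x 0 * y 1 - x 1 * y 0]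

/-- Partial derivative with respect to the first variable `s`. -/
def pds {E : Type*} [NormedAddCommGroup E] [NormedSpace ℝ E]
    (f : ℝ × ℝ → E) (p : ℝ × ℝ) : E := deriv (fun s => f (s, p.2)) p.1

/-- Partial derivative with respect to the second variable `t`. -/
def pdt {E : Type*} [NormedAddCommGroup E] [NormedSpace ℝ E]
    (f : ℝ × ℝ → E) (p : ℝ × ℝ) : E := deriv (fun t => f (p.1, t)) p.2

/-!
The `s`- and `t`-derivatives of `E₁` commute. Expanding `(E₁)ₛₜ = (k₁T)ₜ` and
`(E₁)ₜₛ = ((k₂)ₛT + uE₂)ₛ` with the frame equations, the `E₁`-terms `k₁(k₂)ₛE₁` cancel, which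
leaves a linear relation between `T` and `E₂`. Since `E₂` is orthogonal to `T` but not to itself,
it is not a multiple of `T`, so the coefficients of `E₂` agree: `k₁(k₁)ₛ = k₂(k₂)ₛ + uₛ`. Hence
`u` and `½(k₁² − k₂²)` have the same `s`-derivative and differ by a function of `t` alone.
-/

lemma differentiable_fderiv_of_contDiff_two {𝕜 E F : Type*} [NontriviallyNormedField 𝕜]
    [NormedAddCommGroup E] [NormedSpace 𝕜 E] [NormedAddCommGroup F] [NormedSpace 𝕜 F] {f : E → F}
    (hf : ContDiff 𝕜 2 f) : Differentiable 𝕜 (fderiv 𝕜 f) :=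
  (hf.fderiv_right (m := 1) (by norm_num)).differentiable one_ne_zero

section PartialDerivatives

variable {E : Type*} [NormedAddCommGroup E] [NormedSpace ℝ E]
  {c : ℝ × ℝ → ℝ} {f g : ℝ × ℝ → E} {p : ℝ × ℝ}

lemma hasDerivAt_fst_slice (hf : DifferentiableAt ℝ f p) :
    HasDerivAt (fun s ↦ f (s, p.2)) (fderiv ℝ f p (1, 0)) p.1 :=
  hf.hasFDerivAt.comp_hasDerivAt p.1 ((hasDerivAt_id p.1).prodMk (hasDerivAt_const p.1 p.2))

lemma pds_eq_fderiv (hf : DifferentiableAt ℝ f p) : pds f p = fderiv ℝ f p (1, 0) :=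
  (hasDerivAt_fst_slice hf).deriv

lemma pdt_eq_fderiv (hf : DifferentiableAt ℝ f p) : pdt f p = fderiv ℝ f p (0, 1) :=
  (hf.hasFDerivAt.comp_hasDerivAt p.2
    ((hasDerivAt_const p.2 p.1).prodMk (hasDerivAt_id p.2))).deriv

lemma pds_add (hf : DifferentiableAt ℝ f p) (hg : DifferentiableAt ℝ g p) :
    pds (fun q ↦ f q + g q) p = pds f p + pds g p := by
  rw [pds_eq_fderiv (hf.fun_add hg), pds_eq_fderiv hf, pds_eq_fderiv hg, fderiv_fun_add hf hg,
    add_apply]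

lemma pds_smul (hc : DifferentiableAt ℝ c p) (hf : DifferentiableAt ℝ f p) :
    pds (fun q ↦ c q • f q) p = c p • pds f p + pds c p • f p := by
  rw [pds_eq_fderiv (hc.fun_smul hf), pds_eq_fderiv hc, pds_eq_fderiv hf, fderiv_fun_smul hc hf]
  simp

lemma pdt_smul (hc : DifferentiableAt ℝ c p) (hf : DifferentiableAt ℝ f p) :
    pdt (fun q ↦ c q • f q) p = c p • pdt f p + pdt c p • f p := by
  rw [pdt_eq_fderiv (hc.fun_smul hf), pdt_eq_fderiv hc, pdt_eq_fderiv hf, fderiv_fun_smul hc hf]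
  simp

lemma differentiable_pds (hf : ContDiff ℝ 2 f) : Differentiable ℝ (pds f) := by
  have hpds : pds f = fun q ↦ fderiv ℝ f q (1, 0) :=
    funext fun q ↦ pds_eq_fderiv (hf.differentiable two_ne_zero q)
  rw [hpds]
  exact (differentiable_fderiv_of_contDiff_two hf).clm_apply (differentiable_const _)

lemma pdt_pds_comm (hf : ContDiff ℝ 2 f) (p : ℝ × ℝ) : pdt (pds f) p = pds (pdt f) p := by
  have hf' := hf.differentiable two_ne_zero
  have hpds : pds f = fun q ↦ fderiv ℝ f q (1, 0) := funext fun q ↦ pds_eq_fderiv (hf' q)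
  have hpdt : pdt f = fun q ↦ fderiv ℝ f q (0, 1) := funext fun q ↦ pdt_eq_fderiv (hf' q)
  have hdf := differentiable_fderiv_of_contDiff_two hf
  have hdir (v : ℝ × ℝ) : DifferentiableAt ℝ (fun q ↦ fderiv ℝ f q v) p :=
    (hdf p).clm_apply (differentiableAt_const v)
  have hfderiv (v w : ℝ × ℝ) :
      fderiv ℝ (fun q ↦ fderiv ℝ f q v) p w = fderiv ℝ (fderiv ℝ f) p w v := by
    simp [fderiv_clm_apply (hdf p) (differentiableAt_const v)]
  calc
    pdt (pds f) p = fderiv ℝ (fderiv ℝ f) p (0, 1) (1, 0) := by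
      rw [hpds, pdt_eq_fderiv (hdir _), hfderiv]
    _ = fderiv ℝ (fderiv ℝ f) p (1, 0) (0, 1) :=
      hf.contDiffAt.isSymmSndFDerivAt (by simp) _ _
    _ = pds (pdt f) p := by rw [hpdt, pds_eq_fderiv (hdir _), hfderiv]

lemma exists_eq_add_const_of_pds_eq (hf : Differentiable ℝ f) (hg : Differentiable ℝ g)
    (hfg : ∀ p, pds f p = pds g p) (t : ℝ) : ∃ c, ∀ s, f (s, t) = g (s, t) + c := by
  have hderiv (s : ℝ) : HasDerivAt (fun s ↦ f (s, t) - g (s, t)) 0 s := by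
    have h := (hasDerivAt_fst_slice (hf (s, t))).fun_sub (hasDerivAt_fst_slice (hg (s, t)))
    rwa [← pds_eq_fderiv (hf _), ← pds_eq_fderiv (hg _), hfg, sub_self] at h
  refine ⟨f (0, t) - g (0, t), fun s ↦ ?_⟩
  rw [← is_const_of_deriv_eq_zero (fun x ↦ (hderiv x).differentiableAt)
    (fun x ↦ (hderiv x).deriv) s 0, add_sub_cancel]

lemma pds_half_sq_sub_sq {a b : ℝ × ℝ → ℝ} (ha : DifferentiableAt ℝ a p)
    (hb : DifferentiableAt ℝ b p) :
    pds (fun q ↦ (a q ^ 2 - b q ^ 2) / 2) p = a p * pds a p - b p * pds b p := by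
  have h := ((((hasDerivAt_fst_slice ha).fun_pow 2).fun_sub
    ((hasDerivAt_fst_slice hb).fun_pow 2)).div_const 2).deriv
  rw [pds, h, pds_eq_fderiv ha, pds_eq_fderiv hb]
  ring

end PartialDerivatives

lemma eq_zero_of_smul_add_smul_eq_zero {K M : Type*} [DivisionRing K] [AddCommGroup M]
    [Module K M] {x y : M} (hy : y ∉ Submodule.span K {x}) {a b : K} (h : a • x + b • y = 0) :
    b = 0 := by
  by_contra hb
  have hby : b • y ∈ Submodule.span K {x} := by
    rw [eq_neg_of_add_eq_zero_right h]
    exact neg_mem (Submodule.smul_mem _ a (Submodule.mem_span_singleton_self x))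
  exact hy ((Submodule.smul_mem_iff _ hb).mp hby)

section Frame

variable {V : Type*} [NormedAddCommGroup V] [NormedSpace ℝ V]
  {T E₁ E₂ : ℝ × ℝ → V} {k₁ k₂ u : ℝ × ℝ → ℝ}

lemma smul_add_smul_eq_zero_of_frame_equations
    (hT : Differentiable ℝ T) (hE₁ : ContDiff ℝ 2 E₁) (hE₂ : Differentiable ℝ E₂)
    (hk₁ : Differentiable ℝ k₁) (hk₂ : ContDiff ℝ 2 k₂) (hu : Differentiable ℝ u)
    (hTs : ∀ p, pds T p = k₁ p • E₁ p + k₂ p • E₂ p)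
    (hE₁s : ∀ p, pds E₁ p = k₁ p • T p)
    (hE₂s : ∀ p, pds E₂ p = -(k₂ p) • T p)
    (hTt : ∀ p, pdt T p = pds k₂ p • E₁ p + pds k₁ p • E₂ p)
    (hE₁t : ∀ p, pdt E₁ p = pds k₂ p • T p + u p • E₂ p) (p : ℝ × ℝ) :
    (pdt k₁ p - pds (pds k₂) p + u p * k₂ p) • T p +
      (k₁ p * pds k₁ p - k₂ p * pds k₂ p - pds u p) • E₂ p = 0 := by
  have hk₂s := differentiable_pds hk₂
  have hts : pdt (pds E₁) p =
      k₁ p • (pds k₂ p • E₁ p + pds k₁ p • E₂ p) + pdt k₁ p • T p := by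
    rw [funext hE₁s, pdt_smul (hk₁ p) (hT p), hTt]
  have hst : pds (pdt E₁) p =
      pds k₂ p • (k₁ p • E₁ p + k₂ p • E₂ p) + pds (pds k₂) p • T p +
        (u p • -(k₂ p) • T p + pds u p • E₂ p) := by
    rw [funext hE₁t, pds_add ((hk₂s p).fun_smul (hT p)) ((hu p).fun_smul (hE₂ p)),
      pds_smul (hk₂s p) (hT p), pds_smul (hu p) (hE₂ p), hTs, hE₂s]
  have hcomm := pdt_pds_comm hE₁ p
  rw [hts, hst, ← sub_eq_zero] at hcomm
  rw [← hcomm]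
  module

theorem statement11_general
    (hT : Differentiable ℝ T) (hE₁ : ContDiff ℝ 2 E₁) (hE₂ : Differentiable ℝ E₂)
    (hk₁ : Differentiable ℝ k₁) (hk₂ : ContDiff ℝ 2 k₂) (hu : Differentiable ℝ u)
    (hE₂_notMem : ∀ p, E₂ p ∉ Submodule.span ℝ {T p})
    (hTs : ∀ p, pds T p = k₁ p • E₁ p + k₂ p • E₂ p)
    (hE₁s : ∀ p, pds E₁ p = k₁ p • T p)
    (hE₂s : ∀ p, pds E₂ p = -(k₂ p) • T p)
    (hTt : ∀ p, pdt T p = pds k₂ p • E₁ p + pds k₁ p • E₂ p)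
    (hE₁t : ∀ p, pdt E₁ p = pds k₂ p • T p + u p • E₂ p) :
    (∀ p, pds u p = k₁ p * pds k₁ p - k₂ p * pds k₂ p) ∧
    (∀ t : ℝ, ∃ c : ℝ, ∀ s : ℝ,
      u (s, t) = (k₁ (s, t) ^ 2 - k₂ (s, t) ^ 2) / 2 + c) := by
  have hus (p : ℝ × ℝ) : pds u p = k₁ p * pds k₁ p - k₂ p * pds k₂ p := by
    have hrel :=
      smul_add_smul_eq_zero_of_frame_equations hT hE₁ hE₂ hk₁ hk₂ hu hTs hE₁s hE₂s hTt hE₁t p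
    exact (sub_eq_zero.mp (eq_zero_of_smul_add_smul_eq_zero (hE₂_notMem p) hrel)).symm
  have hk₂' := hk₂.differentiable two_ne_zero
  have hsq : Differentiable ℝ fun q ↦ (k₁ q ^ 2 - k₂ q ^ 2) / 2 := by fun_prop
  refine ⟨hus, exists_eq_add_const_of_pds_eq hu hsq fun p ↦ ?_⟩
  rw [hus, pds_half_sq_sub_sq (hk₁ p) (hk₂' p)]

end Frame

lemma lor_smul_left (a : ℝ) (x y : V3) : lor (a • x) y = a * lor x y := by
  simp only [lor, Pi.smul_apply, smul_eq_mul]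
  ring

lemma notMem_span_singleton_of_lor_eq_zero {x y : V3} (hxy : lor x y = 0) (hy : lor y y ≠ 0) :
    y ∉ Submodule.span ℝ {x} := by
  intro hmem
  obtain ⟨a, rfl⟩ := Submodule.mem_span_singleton.mp hmem
  exact hy (by rw [lor_smul_left, hxy, mul_zero])

/-- For a parallel frame `(T,E₁,E₂)` of signature `(+,−,+)` with
`Tₛ = k₁E₁ + k₂E₂`, `(E₁)ₛ = k₁T`, `(E₂)ₛ = −k₂T`, and time evolution
`T_t = (k₂)ₛE₁ + (k₁)ₛE₂`, `(E₁)_t = (k₂)ₛT + uE₂`, `(E₂)_t = −(k₁)ₛT + uE₁`,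
one has `uₛ = k₁(k₁)ₛ − k₂(k₂)ₛ`, hence `u(s,t) = ½(k₁² − k₂²)(s,t) + c(t)`. -/
theorem statement11 (T E₁ E₂ : ℝ × ℝ → V3) (k₁ k₂ u : ℝ × ℝ → ℝ)
    (hT : ContDiff ℝ (⊤ : ℕ∞) T) (hE₁ : ContDiff ℝ (⊤ : ℕ∞) E₁) (hE₂ : ContDiff ℝ (⊤ : ℕ∞) E₂)
    (hk₁ : ContDiff ℝ (⊤ : ℕ∞) k₁) (hk₂ : ContDiff ℝ (⊤ : ℕ∞) k₂) (hu : ContDiff ℝ (⊤ : ℕ∞) u)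
    (hTT : ∀ p, lor (T p) (T p) = 1)
    (hE₁E₁ : ∀ p, lor (E₁ p) (E₁ p) = -1)
    (hE₂E₂ : ∀ p, lor (E₂ p) (E₂ p) = 1)
    (hTE₁ : ∀ p, lor (T p) (E₁ p) = 0)
    (hTE₂ : ∀ p, lor (T p) (E₂ p) = 0)
    (hE₁E₂ : ∀ p, lor (E₁ p) (E₂ p) = 0)
    (hTs : ∀ p, pds T p = k₁ p • E₁ p + k₂ p • E₂ p)
    (hE₁s : ∀ p, pds E₁ p = k₁ p • T p)
    (hE₂s : ∀ p, pds E₂ p = -(k₂ p) • T p)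
    (hTt : ∀ p, pdt T p = (pds k₂ p) • E₁ p + (pds k₁ p) • E₂ p)
    (hE₁t : ∀ p, pdt E₁ p = (pds k₂ p) • T p + u p • E₂ p)
    (hE₂t : ∀ p, pdt E₂ p = -(pds k₁ p) • T p + u p • E₁ p) :
    (∀ p, pds u p = k₁ p * pds k₁ p - k₂ p * pds k₂ p) ∧
    (∀ t : ℝ, ∃ c : ℝ, ∀ s : ℝ,
      u (s, t) = (k₁ (s, t) ^ 2 - k₂ (s, t) ^ 2) / 2 + c) :=
  statement11_general (hT.differentiable (by simp)) (contDiff_infty.mp hE₁ 2)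
    (hE₂.differentiable (by simp)) (hk₁.differentiable (by simp)) (contDiff_infty.mp hk₂ 2)
    (hu.differentiable (by simp))
    (fun p ↦ notMem_span_singleton_of_lor_eq_zero (hTE₂ p) (by simp [hE₂E₂]))
    hTs hE₁s hE₂s hTt hE₁t
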